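/- Let (a^k)_k and (b^k)_k be two sequences in the class 𝒮. Then there exist a strictly increasing sequence of positive integers (k_j)_j and a probability measure μ supported in I² = [0,1]² such that for every continuous function φ on [−3,3], lim_{j→∞} (1/k_j)·Trace[φ(J(a^{k_j}, b^{k_j}))] = (1/π) ∫_{I²} ∫_0^π φ(x + 2y·cos t) dt dμ(x,y). -/

import Mathlib

open Filter MeasureTheory

noncomputable section

/-- The `k × k` Jacobi (real symmetric tridiagonal) matrix with diagonal entries
`a 0, …, a (k-1)` and sub/super-diagonal entries `b 0, …, b (k-2)` (0-indexed). -/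
def jacobiMatrix (k : ℕ) (a b : ℕ → ℝ) : Matrix (Fin k) (Fin k) ℝ :=
  Matrix.of fun i j =>
    if (i : ℕ) = (j : ℕ) then a i
    else if (i : ℕ) + 1 = (j : ℕ) then b i
    else if (j : ℕ) + 1 = (i : ℕ) then b j
    else 0

theorem jacobiMatrix_isHermitian (k : ℕ) (a b : ℕ → ℝ) :
    (jacobiMatrix k a b).IsHermitian := by
  show _ = _
  ext i j
  simp only [Matrix.conjTranspose_apply, jacobiMatrix, Matrix.of_apply, star_trivial]
  by_cases h1 : (i : ℕ) = (j : ℕ)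
  · have h : i = j := Fin.ext h1
    subst h
    rfl
  · have h1' : ¬ (j : ℕ) = (i : ℕ) := fun h => h1 h.symm
    by_cases h2 : (i : ℕ) + 1 = (j : ℕ)
    · have h3 : ¬ (j : ℕ) + 1 = (i : ℕ) := by omega
      simp [h1, h1', h2, h3]
    · by_cases h3 : (j : ℕ) + 1 = (i : ℕ) <;> simp [h1, h1', h2, h3]

/-- `Trace[φ(J(a,b))] = ∑ⱼ φ(λⱼ)`, the sum of `φ` over the eigenvalues of the Jacobi matrix. -/
def jacobiTrace (k : ℕ) (a b : ℕ → ℝ) (φ : ℝ → ℝ) : ℝ :=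
  ∑ i, φ ((jacobiMatrix_isHermitian k a b).eigenvalues i)

/-- The class `𝒮`: small deviations `∑ᵢ |a_{i+1}^k − a_i^k| = o(k)` and entries in `[0,1]`. -/
def MemS (a : ℕ → ℕ → ℝ) : Prop :=
  ((fun k : ℕ => ∑ i ∈ Finset.range (k - 1), |a k (i + 1) - a k i|)
      =o[Filter.atTop] fun k : ℕ => (k : ℝ)) ∧
  ∀ k : ℕ, ∀ i < k, a k i ∈ Set.Icc (0 : ℝ) 1

/-- The class `𝒮′`: for every `δ ∈ (0,1)`, `∑ᵢ |a_{i+1}^k − a_i^k| = O(k^{1−δ})`, and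
`maxᵢ |a_i^k| = O(log k)`. -/
def MemS' (a : ℕ → ℕ → ℝ) : Prop :=
  (∀ δ : ℝ, δ ∈ Set.Ioo (0 : ℝ) 1 →
    ((fun k : ℕ => ∑ i ∈ Finset.range (k - 1), |a k (i + 1) - a k i|)
        =O[Filter.atTop] fun k : ℕ => (k : ℝ) ^ (1 - δ))) ∧
  ∃ C : ℝ, ∀ᶠ k : ℕ in Filter.atTop, ∀ i < k, |a k i| ≤ C * Real.log k

/-- `μ`-distributed on `I² = [0,1]²`. -/
def MuDistributedI (a b : ℕ → ℕ → ℝ) (μ : Measure (ℝ × ℝ)) : Prop :=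
  ∀ ψ : ℝ × ℝ → ℝ, ContinuousOn ψ (Set.Icc (0 : ℝ) 1 ×ˢ Set.Icc (0 : ℝ) 1) →
    Filter.Tendsto (fun k : ℕ => (1 / (k : ℝ)) * ∑ j ∈ Finset.range k, ψ (a k j, b k j))
      Filter.atTop (nhds (∫ p, ψ p ∂μ))

/-- `μ`-distributed on `ℝ²` (test functions: bounded continuous). -/
def MuDistributedR (a b : ℕ → ℕ → ℝ) (μ : Measure (ℝ × ℝ)) : Prop :=
  ∀ ψ : ℝ × ℝ → ℝ, Continuous ψ → (∃ C : ℝ, ∀ p, |ψ p| ≤ C) →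
    Filter.Tendsto (fun k : ℕ => (1 / (k : ℝ)) * ∑ j ∈ Finset.range k, ψ (a k j, b k j))
      Filter.atTop (nhds (∫ p, ψ p ∂μ))

/-- Tightness via closed bounded rectangles. -/
def TightRect (μ : Measure (ℝ × ℝ)) : Prop :=
  ∀ ε : ℝ, 0 < ε → ∃ x₁ x₂ y₁ y₂ : ℝ,
    μ ((Set.Icc x₁ x₂ ×ˢ Set.Icc y₁ y₂)ᶜ) < ENNReal.ofReal ε

/-- Almost everywhere increasing sequence of vectors. -/
def AEIncreasing (a : ℕ → ℕ → ℝ) : Prop :=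
  Filter.Tendsto
    (fun k : ℕ => (((Finset.range (k - 1)).filter fun i => a k i ≤ a k (i + 1)).card : ℝ) / k)
    Filter.atTop (nhds 1)

/-- Almost everywhere decreasing sequence of vectors. -/
def AEDecreasing (a : ℕ → ℕ → ℝ) : Prop :=
  Filter.Tendsto
    (fun k : ℕ => (((Finset.range (k - 1)).filter fun i => a k (i + 1) ≤ a k i).card : ℝ) / k)
    Filter.atTop (nhds 1)

/-- Almost everywhere monotone sequence of vectors. -/
def AEMonotone (a : ℕ → ℕ → ℝ) : Prop :=
  AEIncreasing a ∨ AEDecreasing a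

/-!
For constant entries `x` and `y`, a sequence `v` with `v (j + 1) + v (j - 1) = 2 * cos t * v j`,
such as `cos (j * t)` or `sin (j * t)`, is a generalized eigenvector of the infinite Jacobi matrix,
with eigenvalue the symbol `x + 2 * y * cos t`. If the entries vary slowly, a `k × k` Jacobi matrix
still acts on such a sequence, even modulated by a slowly varying factor, as multiplication by
`a i + 2 * b i * cos t`, up to an `ℓ¹` error `o(k)`. Bounded sequences of variation `o(k)` form an
algebra, so this passes to polynomials `p` in the matrix.

By orthogonality of the cosines, `π` times the trace of a matrix `M` is the integral over `[0, π]`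
of `∑ i, (cos (i * t) * (M (cos (· * t))) i + sin (i * t) * (M (sin (· * t))) i)`, and the mean
value theorem replaces the mean over `t` by the value at one angle depending on `k`, so no
uniformity in `t` is needed. Hence the trace of `p` of the matrix is the sum over `i` of the means
of `p` along the symbols, up to `o(k)`. Weierstrass approximation extends this to continuous `φ`,
and `μ` is a weak limit of the empirical measures of the points `(a i, b i)`.
-/

open Asymptotics Polynomial
open scoped Matrix Topology

section Variation

/-- The total variation of the first `k` terms of `a`, which the class `𝒮` requires to be `o(k)`. -/
def variation (k : ℕ) (a : ℕ → ℝ) : ℝ :=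
  ∑ i ∈ Finset.range (k - 1), |a (i + 1) - a i|

theorem variation_nonneg (k : ℕ) (a : ℕ → ℝ) : 0 ≤ variation k a :=
  Finset.sum_nonneg fun _ _ => abs_nonneg _

theorem variation_const (k : ℕ) (c : ℝ) : variation k (fun _ => c) = 0 := by
  simp [variation]

theorem variation_add_le (k : ℕ) (a b : ℕ → ℝ) :
    variation k (fun i => a i + b i) ≤ variation k a + variation k b := by
  simp only [variation, ← Finset.sum_add_distrib]
  refine Finset.sum_le_sum fun i _ => ?_
  rw [add_sub_add_comm]
  exact abs_add_le _ _

theorem variation_mul_le {k : ℕ} {a b : ℕ → ℝ} {A B : ℝ} (ha : ∀ i < k, |a i| ≤ A)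
    (hb : ∀ i < k, |b i| ≤ B) :
    variation k (fun i => a i * b i) ≤ A * variation k b + B * variation k a := by
  simp only [variation, Finset.mul_sum, ← Finset.sum_add_distrib]
  refine Finset.sum_le_sum fun i hi => ?_
  rw [Finset.mem_range] at hi
  calc |a (i + 1) * b (i + 1) - a i * b i|
      = |a (i + 1) * (b (i + 1) - b i) + b i * (a (i + 1) - a i)| := by ring_nf
    _ ≤ |a (i + 1)| * |b (i + 1) - b i| + |b i| * |a (i + 1) - a i| := by
        rw [← abs_mul, ← abs_mul]
        exact abs_add_le _ _
    _ ≤ A * |b (i + 1) - b i| + B * |a (i + 1) - a i| := by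
        gcongr
        · exact ha _ (by omega)
        · exact hb _ (by omega)

end Variation

/-- The class `𝒮` with the interval `[0,1]` relaxed to an arbitrary bounded range. Unlike `𝒮`, it
is an algebra, and so contains every polynomial in the symbol of a Jacobi matrix with entries in
`𝒮`. -/
structure SlowlyVarying (a : ℕ → ℕ → ℝ) : Prop where
  isLittleO_variation : (fun k => variation k (a k)) =o[atTop] fun k : ℕ => (k : ℝ)
  exists_bound : ∃ A, ∀ k, ∀ i < k, |a k i| ≤ A

theorem isLittleO_of_nonneg_of_le {α : Type*} {l : Filter α} {u v w : α → ℝ}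
    (hu : ∀ᶠ x in l, 0 ≤ u x) (huv : ∀ᶠ x in l, u x ≤ v x) (hv : v =o[l] w) : u =o[l] w := by
  refine IsBigO.trans_isLittleO (IsBigO.of_bound' ?_) hv
  filter_upwards [hu, huv] with x h0 h
  rw [Real.norm_of_nonneg h0]
  exact h.trans (Real.le_norm_self _)

namespace SlowlyVarying

variable {a b : ℕ → ℕ → ℝ}

theorem const {c : ℕ → ℝ} {C : ℝ} (hc : ∀ k, |c k| ≤ C) : SlowlyVarying fun k _ => c k where
  isLittleO_variation := by simpa only [variation_const] using isLittleO_zero _ _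
  exists_bound := ⟨C, fun k _ _ => hc k⟩

theorem add (ha : SlowlyVarying a) (hb : SlowlyVarying b) :
    SlowlyVarying fun k i => a k i + b k i where
  isLittleO_variation :=
    isLittleO_of_nonneg_of_le (.of_forall fun _ => variation_nonneg _ _)
      (.of_forall fun _ => variation_add_le _ _ _)
      (ha.isLittleO_variation.add hb.isLittleO_variation)
  exists_bound := by
    obtain ⟨A, hA⟩ := ha.exists_bound
    obtain ⟨B, hB⟩ := hb.exists_bound
    exact ⟨A + B, fun k i hi => (abs_add_le _ _).trans (add_le_add (hA k i hi) (hB k i hi))⟩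

theorem mul (ha : SlowlyVarying a) (hb : SlowlyVarying b) :
    SlowlyVarying fun k i => a k i * b k i := by
  obtain ⟨A, hA⟩ := ha.exists_bound
  obtain ⟨B, hB⟩ := hb.exists_bound
  refine ⟨?_, A * B, fun k i hi => ?_⟩
  · exact isLittleO_of_nonneg_of_le (.of_forall fun _ => variation_nonneg _ _)
      (.of_forall fun k => variation_mul_le (hA k) (hB k))
      ((hb.isLittleO_variation.const_mul_left A).add (ha.isLittleO_variation.const_mul_left B))
  · rw [abs_mul]
    exact mul_le_mul (hA k i hi) (hB k i hi) (abs_nonneg _) ((abs_nonneg _).trans (hA k i hi))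

theorem eval (ha : SlowlyVarying a) (p : ℝ[X]) : SlowlyVarying fun k i => p.eval (a k i) := by
  induction p using Polynomial.induction_on with
  | C r => simpa only [eval_C] using const fun _ => le_refl |r|
  | add p q hp hq => simpa only [eval_add] using hp.add hq
  | monomial n r h => simpa only [pow_succ, ← mul_assoc, eval_mul_X] using h.mul ha

end SlowlyVarying

section Matrix

theorem sum_norm_mulVec_le {m n α : Type*} [Fintype m] [Fintype n] [NonUnitalSeminormedRing α]
    {M : Matrix m n α} {R : ℝ} (hM : ∀ j, ∑ i, ‖M i j‖ ≤ R) (w : n → α) :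
    ∑ i, ‖(M *ᵥ w) i‖ ≤ R * ∑ j, ‖w j‖ :=
  calc ∑ i, ‖(M *ᵥ w) i‖ ≤ ∑ i, ∑ j, ‖M i j‖ * ‖w j‖ := by
        gcongr with i
        exact norm_sum_le_of_le _ fun j _ => norm_mul_le _ _
    _ = ∑ j, (∑ i, ‖M i j‖) * ‖w j‖ := by
        rw [Finset.sum_comm]
        simp only [Finset.sum_mul]
    _ ≤ ∑ j, R * ‖w j‖ := by
        gcongr with j
        exact hM j
    _ = R * ∑ j, ‖w j‖ := (Finset.mul_sum _ _ _).symm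

variable {n 𝕜 : Type*} [Fintype n] [DecidableEq n] [RCLike 𝕜]

theorem abs_eigenvalues_le_of_sum_norm_le {M : Matrix n n 𝕜} (hM : M.IsHermitian) {R : ℝ}
    (hR : ∀ i, ∑ j, ‖M i j‖ ≤ R) (i : n) : |hM.eigenvalues i| ≤ R := by
  have hspec : ((hM.eigenvalues i : ℝ) : 𝕜) ∈ spectrum 𝕜 M := by
    simpa using hM.eigenvalues_mem_spectrum_real i
  rw [← Matrix.spectrum_toLin', ← Module.End.hasEigenvalue_iff_mem_spectrum] at hspec
  obtain ⟨l, hl⟩ := eigenvalue_mem_ball hspec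
  rw [mem_closedBall_iff_norm] at hl
  calc |hM.eigenvalues i| = ‖((hM.eigenvalues i : ℝ) : 𝕜)‖ := by simp
    _ ≤ ‖M l l‖ + ‖((hM.eigenvalues i : ℝ) : 𝕜) - M l l‖ := norm_le_norm_add_norm_sub' _ _
    _ ≤ ‖M l l‖ + ∑ j ∈ Finset.univ.erase l, ‖M l j‖ := by gcongr
    _ = ∑ j, ‖M l j‖ := Finset.add_sum_erase _ (fun j => ‖M l j‖) (Finset.mem_univ l)
    _ ≤ R := hR l

theorem sum_eval_eigenvalues_eq_trace_aeval {M : Matrix n n 𝕜} (hM : M.IsHermitian) (p : ℝ[X]) :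
    ((∑ i, p.eval (hM.eigenvalues i) : ℝ) : 𝕜) = (aeval M p).trace := by
  have hcfc : aeval M p = hM.cfc p.eval := by
    rw [← hM.cfc_eq]
    exact (cfc_polynomial p M hM).symm
  rw [hcfc, Matrix.IsHermitian.cfc, Unitary.conjStarAlgAut_apply, Matrix.trace_mul_cycle]
  simp [Matrix.trace_diagonal]

end Matrix

section Jacobi

variable {k : ℕ} {a b : ℕ → ℝ}

theorem jacobiMatrix_apply (i j : Fin k) :
    jacobiMatrix k a b i j = (if (j : ℕ) = i then a i else 0) +
      (if (j : ℕ) + 1 = i then b j else 0) + (if (j : ℕ) = i + 1 then b i else 0) := by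
  simp only [jacobiMatrix, Matrix.of_apply]
  split_ifs <;> first | omega | simp

theorem jacobiMatrix_mulVec (u : ℕ → ℝ) (i : Fin k) :
    (jacobiMatrix k a b *ᵥ fun j => u j) i = a i * u i +
      (if 1 ≤ (i : ℕ) then b (i - 1) * u (i - 1) else 0) +
      (if (i : ℕ) + 1 < k then b i * u (i + 1) else 0) := by
  have hsub : ∀ j : ℕ, (j + 1 = i ↔ j = i - 1 ∧ 1 ≤ (i : ℕ)) := by omega
  have hlt : (i : ℕ) - 1 < k := by omega
  simp only [Matrix.mulVec, dotProduct, jacobiMatrix_apply, add_mul, ite_mul, zero_mul,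
    Finset.sum_add_distrib]
  rw [Fin.sum_univ_eq_sum_range (fun j => if j = (i : ℕ) then a i * u j else 0),
    Fin.sum_univ_eq_sum_range (fun j => if j + 1 = (i : ℕ) then b j * u j else 0),
    Fin.sum_univ_eq_sum_range (fun j => if j = (i : ℕ) + 1 then b i * u j else 0)]
  simp [hsub, ite_and, hlt]

theorem abs_jacobiMatrix_apply (i j : Fin k) :
    |jacobiMatrix k a b i j| = jacobiMatrix k (fun l => |a l|) (fun l => |b l|) i j := by
  simp only [jacobiMatrix, Matrix.of_apply, apply_ite abs, abs_zero]

theorem sum_abs_jacobiMatrix_apply_le {R : ℝ}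
    (hR : ∀ i < k, ∀ j < k, |a i| + |b i| + |b j| ≤ R) (i : Fin k) :
    ∑ j, |jacobiMatrix k a b i j| ≤ R := by
  have hrow : ∑ j, |jacobiMatrix k a b i j| =
      (jacobiMatrix k (fun l => |a l|) (fun l => |b l|) *ᵥ fun _ => 1) i := by
    simp only [abs_jacobiMatrix_apply, Matrix.mulVec, dotProduct, mul_one]
  rw [hrow, jacobiMatrix_mulVec fun _ => 1]
  have hi := hR i i.2 (i - 1) (by omega)
  have hb := abs_nonneg (b i)
  have hb' := abs_nonneg (b (i - 1))
  split_ifs <;> linarith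

theorem abs_jacobiMatrix_eigenvalues_le {R : ℝ}
    (hR : ∀ i < k, ∀ j < k, |a i| + |b i| + |b j| ≤ R) (i : Fin k) :
    |(jacobiMatrix_isHermitian k a b).eigenvalues i| ≤ R :=
  abs_eigenvalues_le_of_sum_norm_le _ (sum_abs_jacobiMatrix_apply_le hR) i

theorem sum_abs_jacobiMatrix_mulVec_le {R : ℝ}
    (hR : ∀ i < k, ∀ j < k, |a i| + |b i| + |b j| ≤ R) (w : Fin k → ℝ) :
    ∑ i, |(jacobiMatrix k a b *ᵥ w) i| ≤ R * ∑ j, |w j| := by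
  refine sum_norm_mulVec_le (fun j => ?_) w
  have hsymm : ∀ i, jacobiMatrix k a b i j = jacobiMatrix k a b j i :=
    fun i => (jacobiMatrix_isHermitian k a b).apply j i
  simpa only [hsymm, Real.norm_eq_abs] using sum_abs_jacobiMatrix_apply_le hR j

end Jacobi

section FreeWave

/-- A bounded solution of the eigenvalue equation, with eigenvalue `2 * c`, of the free Jacobi
operator on `ℤ` (zero diagonal, unit off-diagonal). -/
structure IsFreeWave (c : ℝ) (v : ℤ → ℝ) : Prop where
  abs_le_one : ∀ j, |v j| ≤ 1
  add_eq : ∀ j, v (j + 1) + v (j - 1) = 2 * c * v j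

/-- The even free wave of frequency `t`. -/
def cosWave (t : ℝ) (j : ℤ) : ℝ := Real.cos (j * t)

/-- The odd free wave of frequency `t`. -/
def sinWave (t : ℝ) (j : ℤ) : ℝ := Real.sin (j * t)

theorem isFreeWave_cosWave (t : ℝ) : IsFreeWave (Real.cos t) (cosWave t) where
  abs_le_one _ := Real.abs_cos_le_one _
  add_eq j := by
    simp only [cosWave, Int.cast_add, Int.cast_sub, Int.cast_one, add_mul, sub_mul, one_mul,
      Real.cos_add, Real.cos_sub]
    ring

theorem isFreeWave_sinWave (t : ℝ) : IsFreeWave (Real.cos t) (sinWave t) where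
  abs_le_one _ := Real.abs_sin_le_one _
  add_eq j := by
    simp only [sinWave, Int.cast_add, Int.cast_sub, Int.cast_one, add_mul, sub_mul, one_mul,
      Real.sin_add, Real.sin_sub]
    ring

theorem cosWave_mul_self_add_sinWave_mul_self (t : ℝ) (j : ℤ) :
    cosWave t j * cosWave t j + sinWave t j * sinWave t j = 1 := by
  rw [← sq, ← sq, cosWave, sinWave, Real.cos_sq_add_sin_sq]

theorem cosWave_mul_add_sinWave_mul (t : ℝ) (i j : ℤ) :
    cosWave t i * cosWave t j + sinWave t i * sinWave t j = Real.cos ((i - j : ℤ) * t) := by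
  rw [Int.cast_sub, sub_mul, Real.cos_sub, cosWave, cosWave, sinWave, sinWave]

@[fun_prop]
theorem continuous_cosWave (j : ℤ) : Continuous fun t => cosWave t j := by
  unfold cosWave
  fun_prop

@[fun_prop]
theorem continuous_sinWave (j : ℤ) : Continuous fun t => sinWave t j := by
  unfold sinWave
  fun_prop

variable {k : ℕ} {a b : ℕ → ℝ} {c : ℝ} {v : ℤ → ℝ}

theorem IsFreeWave.jacobiMatrix_mulVec_sub (hv : IsFreeWave c v) (d : ℕ → ℝ) (i : Fin k) :
    (jacobiMatrix k a b *ᵥ fun j => d j * v j) i - (a i + 2 * b i * c) * (d i * v i) =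
      ((if 1 ≤ (i : ℕ) then b (i - 1) * d (i - 1) else 0) - b i * d i) * v (i - 1) +
      ((if (i : ℕ) + 1 < k then b i * d (i + 1) else 0) - b i * d i) * v (i + 1) := by
  rw [jacobiMatrix_mulVec fun j => d j * v j]
  have hpred : (if 1 ≤ (i : ℕ) then b (i - 1) * (d (i - 1) * v ((i - 1 : ℕ) : ℤ)) else 0) =
      (if 1 ≤ (i : ℕ) then b (i - 1) * d (i - 1) else 0) * v (i - 1) := by
    split_ifs with h
    · rw [Nat.cast_sub h, Nat.cast_one, mul_assoc]
    · rw [zero_mul]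
  have hsucc : (if (i : ℕ) + 1 < k then b i * (d (i + 1) * v ((i + 1 : ℕ) : ℤ)) else 0) =
      (if (i : ℕ) + 1 < k then b i * d (i + 1) else 0) * v (i + 1) := by
    rw [ite_mul, zero_mul, Nat.cast_add_one, mul_assoc]
  rw [hpred, hsucc]
  linear_combination b i * d i * hv.add_eq i

theorem sum_abs_shift_sub_le (k : ℕ) (g : ℕ → ℝ) :
    ∑ i ∈ Finset.range k, |(if 1 ≤ i then g (i - 1) else 0) - g i| ≤ variation k g + |g 0| := by
  cases k with
  | zero => simp [variation]
  | succ m => simp [variation, Finset.sum_range_succ', abs_sub_comm]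

theorem sum_abs_mul_shift_sub_le {B : ℝ} (hb : ∀ i < k, |b i| ≤ B) (d : ℕ → ℝ) :
    ∑ i ∈ Finset.range k, |(if i + 1 < k then b i * d (i + 1) else 0) - b i * d i| ≤
      B * variation k d + |b (k - 1) * d (k - 1)| := by
  cases k with
  | zero => simpa [variation] using mul_nonneg (abs_nonneg (b 0)) (abs_nonneg (d 0))
  | succ m =>
    rw [Finset.sum_range_succ, variation, Finset.mul_sum]
    simp only [add_tsub_cancel_right, lt_irrefl, if_false, zero_sub, abs_neg]
    gcongr with i hi
    have him : i < m := Finset.mem_range.1 hi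
    rw [if_pos (by omega), ← mul_sub, abs_mul]
    gcongr
    exact hb i (by omega)

/-- The summands `|b 0 * d 0|` and `|b (k - 1) * d (k - 1)|` come from truncating the wave to
`Fin k`. -/
theorem IsFreeWave.sum_abs_jacobiMatrix_mulVec_sub_le (hv : IsFreeWave c v) {B : ℝ}
    (hb : ∀ i < k, |b i| ≤ B) (d : ℕ → ℝ) :
    ∑ i : Fin k, |(jacobiMatrix k a b *ᵥ fun j => d j * v j) i -
        (a i + 2 * b i * c) * (d i * v i)| ≤
      variation k (fun i => b i * d i) + |b 0 * d 0| +
        (B * variation k d + |b (k - 1) * d (k - 1)|) := by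
  have habs : ∀ (x y : ℝ) (i j : ℤ), |x * v i + y * v j| ≤ |x| + |y| := fun x y i j => by
    refine (abs_add_le _ _).trans (add_le_add ?_ ?_) <;> rw [abs_mul] <;>
      exact mul_le_of_le_one_right (abs_nonneg _) (hv.abs_le_one _)
  simp only [hv.jacobiMatrix_mulVec_sub]
  refine (Finset.sum_le_sum fun i _ => habs _ _ _ _).trans ?_
  rw [Finset.sum_add_distrib,
    Fin.sum_univ_eq_sum_range (fun i => |(if 1 ≤ i then b (i - 1) * d (i - 1) else 0) - b i * d i|),
    Fin.sum_univ_eq_sum_range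
      (fun i => |(if i + 1 < k then b i * d (i + 1) else 0) - b i * d i|)]
  exact add_le_add (sum_abs_shift_sub_le k fun i => b i * d i) (sum_abs_mul_shift_sub_le hb d)

/-- The `ℓ¹` distance on `Fin k` between `M v` and the pointwise product `m v`, measuring how far
`M` is from acting on `v` as the multiplier `m`. -/
def multiplierError (M : Matrix (Fin k) (Fin k) ℝ) (m : ℕ → ℝ) (v : ℤ → ℝ) : ℝ :=
  ∑ i : Fin k, |(M *ᵥ fun j => v j) i - m i * v i|

theorem multiplierError_nonneg (M : Matrix (Fin k) (Fin k) ℝ) (m : ℕ → ℝ) (v : ℤ → ℝ) :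
    0 ≤ multiplierError M m v :=
  Finset.sum_nonneg fun _ _ => abs_nonneg _

theorem multiplierError_add_le (M N : Matrix (Fin k) (Fin k) ℝ) (m n : ℕ → ℝ) (v : ℤ → ℝ) :
    multiplierError (M + N) (fun i => m i + n i) v ≤
      multiplierError M m v + multiplierError N n v := by
  simp only [multiplierError, ← Finset.sum_add_distrib, Matrix.add_mulVec, Pi.add_apply, add_mul,
    add_sub_add_comm]
  gcongr
  exact abs_add_le _ _

theorem multiplierError_algebraMap (r : ℝ) (v : ℤ → ℝ) :
    multiplierError (algebraMap ℝ (Matrix (Fin k) (Fin k) ℝ) r) (fun _ => r) v = 0 := by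
  simp [multiplierError, Algebra.algebraMap_eq_smul_one, Matrix.smul_mulVec]

theorem multiplierError_mul_le {N : Matrix (Fin k) (Fin k) ℝ} {R : ℝ}
    (hN : ∀ w, ∑ i, |(N *ᵥ w) i| ≤ R * ∑ j, |w j|) (M : Matrix (Fin k) (Fin k) ℝ)
    (m n : ℕ → ℝ) (v : ℤ → ℝ) :
    multiplierError (N * M) (fun i => n i * m i) v ≤ R * multiplierError M m v +
      ∑ i : Fin k, |(N *ᵥ fun j => m j * v j) i - n i * (m i * v i)| := by
  have hsplit : ∀ i : Fin k, ((N * M) *ᵥ fun j => v j) i - n i * m i * v i =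
      (N *ᵥ fun j => (M *ᵥ fun l => v l) j - m j * v j) i +
        ((N *ᵥ fun j => m j * v j) i - n i * (m i * v i)) := fun i => by
    have hsub : (N *ᵥ fun j => (M *ᵥ fun l => v l) j - m j * v j) i =
        ((N * M) *ᵥ fun j => v j) i - (N *ᵥ fun j => m j * v j) i := by
      rw [← Matrix.mulVec_mulVec]
      exact congrFun (Matrix.mulVec_sub N _ _) i
    rw [hsub]
    ring
  simp only [multiplierError, hsplit]
  refine (Finset.sum_le_sum fun i _ => abs_add_le _ _).trans ?_
  rw [Finset.sum_add_distrib]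
  gcongr
  exact hN _

end FreeWave

section TraceAsymptotics

variable {k : ℕ}

theorem integral_cos_int_mul (d : ℤ) :
    ∫ t in (0 : ℝ)..Real.pi, Real.cos (d * t) = if d = 0 then Real.pi else 0 := by
  split_ifs with hd
  · simp [hd]
  · rw [intervalIntegral.integral_comp_mul_left Real.cos (Int.cast_ne_zero.2 hd)]
    simp [Real.sin_int_mul_pi]

/-- Orthogonality of the functions `cos (d * t)`, `d ∈ ℤ`, selects the diagonal of `M`. -/
theorem integral_sum_wave_mul_mulVec (M : Matrix (Fin k) (Fin k) ℝ) :
    ∫ t in (0 : ℝ)..Real.pi, ∑ i : Fin k, (cosWave t i * (M *ᵥ fun j => cosWave t j) i +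
      sinWave t i * (M *ᵥ fun j => sinWave t j) i) = Real.pi * M.trace := by
  have hentry : ∀ (t : ℝ) (i : Fin k), cosWave t i * (M *ᵥ fun j => cosWave t j) i +
      sinWave t i * (M *ᵥ fun j => sinWave t j) i =
        ∑ j : Fin k, M i j * Real.cos (((i : ℤ) - (j : ℤ) : ℤ) * t) := fun t i => by
    simp only [Matrix.mulVec, dotProduct, Finset.mul_sum, ← Finset.sum_add_distrib,
      ← cosWave_mul_add_sinWave_mul]
    exact Finset.sum_congr rfl fun j _ => by ring
  have hdiag : ∀ i j : Fin k, (i : ℤ) - (j : ℤ) = 0 ↔ i = j := by omega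
  simp only [hentry]
  rw [intervalIntegral.integral_finsetSum fun i _ =>
    Continuous.intervalIntegrable (by fun_prop) _ _, Matrix.trace, Finset.mul_sum]
  refine Finset.sum_congr rfl fun i _ => ?_
  rw [intervalIntegral.integral_finsetSum fun j _ =>
    Continuous.intervalIntegrable (by fun_prop) _ _]
  simp only [intervalIntegral.integral_const_mul, integral_cos_int_mul, hdiag]
  simp [mul_comm]

/-- The mean over `t ∈ [0, π]` of `φ` along the symbol `x + 2 * y * cos t` of the Jacobi operator
with constant entries `x` and `y`, as a function of `p = (x, y)`. -/
def symbolMean (φ : ℝ → ℝ) (p : ℝ × ℝ) : ℝ :=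
  (1 / Real.pi) * ∫ t in (0 : ℝ)..Real.pi, φ (p.1 + 2 * p.2 * Real.cos t)

theorem exists_trace_sub_sum_symbolMean_eq (M : Matrix (Fin k) (Fin k) ℝ) (x y : ℕ → ℝ)
    {φ : ℝ → ℝ} (hφ : Continuous φ) :
    ∃ t, M.trace - ∑ i : Fin k, symbolMean φ (x i, y i) =
      ∑ i : Fin k, (cosWave t i * ((M *ᵥ fun j => cosWave t j) i -
          φ (x i + 2 * y i * Real.cos t) * cosWave t i) +
        sinWave t i * ((M *ᵥ fun j => sinWave t j) i -
          φ (x i + 2 * y i * Real.cos t) * sinWave t i)) := by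
  have hM : Continuous fun t => ∑ i : Fin k, (cosWave t i * (M *ᵥ fun j => cosWave t j) i +
      sinWave t i * (M *ᵥ fun j => sinWave t j) i) := by
    simp only [Matrix.mulVec, dotProduct]
    fun_prop
  have hsymbol : Continuous fun t => ∑ i : Fin k, φ (x i + 2 * y i * Real.cos t) := by fun_prop
  obtain ⟨t, -, ht⟩ :=
    exists_eq_interval_average Real.pi_pos.ne (hM.fun_sub hsymbol).continuousOn
  refine ⟨t, ?_⟩
  rw [interval_average_eq_div, sub_zero,
    intervalIntegral.integral_sub (hM.intervalIntegrable _ _) (hsymbol.intervalIntegrable _ _),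
    integral_sum_wave_mul_mulVec, intervalIntegral.integral_finsetSum fun i _ =>
      Continuous.intervalIntegrable (by fun_prop) _ _] at ht
  calc M.trace - ∑ i : Fin k, symbolMean φ (x i, y i)
      = (Real.pi * M.trace - ∑ i : Fin k, ∫ t in (0 : ℝ)..Real.pi,
          φ (x i + 2 * y i * Real.cos t)) / Real.pi := by
        simp only [symbolMean, ← Finset.mul_sum]
        field_simp
    _ = _ := ht.symm
    _ = _ := by
        rw [← Finset.sum_sub_distrib]
        refine Finset.sum_congr rfl fun i _ => ?_
        linear_combination
          φ (x i + 2 * y i * Real.cos t) * cosWave_mul_self_add_sinWave_mul_self t i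

theorem exists_abs_trace_sub_sum_symbolMean_le (M : Matrix (Fin k) (Fin k) ℝ) (x y : ℕ → ℝ)
    {φ : ℝ → ℝ} (hφ : Continuous φ) :
    ∃ t, |M.trace - ∑ i : Fin k, symbolMean φ (x i, y i)| ≤
      multiplierError M (fun i => φ (x i + 2 * y i * Real.cos t)) (cosWave t) +
        multiplierError M (fun i => φ (x i + 2 * y i * Real.cos t)) (sinWave t) := by
  obtain ⟨t, ht⟩ := exists_trace_sub_sum_symbolMean_eq M x y hφ
  refine ⟨t, ?_⟩
  rw [ht, multiplierError, multiplierError, ← Finset.sum_add_distrib]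
  refine (Finset.abs_sum_le_sum_abs _ _).trans (Finset.sum_le_sum fun i _ => ?_)
  refine (abs_add_le _ _).trans (add_le_add ?_ ?_) <;> rw [abs_mul]
  · exact mul_le_of_le_one_left (abs_nonneg _) ((isFreeWave_cosWave t).abs_le_one i)
  · exact mul_le_of_le_one_left (abs_nonneg _) ((isFreeWave_sinWave t).abs_le_one i)

variable {a b : ℕ → ℕ → ℝ}

theorem isLittleO_const_natCast (C : ℝ) : (fun _ : ℕ => C) =o[atTop] fun k : ℕ => (k : ℝ) :=
  (isLittleO_const_id_atTop C).comp_tendsto tendsto_natCast_atTop_atTop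

theorem isLittleO_sum_abs_jacobiMatrix_mulVec_sub (a : ℕ → ℕ → ℝ) {d : ℕ → ℕ → ℝ}
    (hb : SlowlyVarying b) (hd : SlowlyVarying d) {c : ℕ → ℝ} {v : ℕ → ℤ → ℝ}
    (hv : ∀ k, IsFreeWave (c k) (v k)) :
    (fun k => ∑ i : Fin k, |(jacobiMatrix k (a k) (b k) *ᵥ fun j => d k j * v k j) i -
      (a k i + 2 * b k i * c k) * (d k i * v k i)|) =o[atTop] fun k : ℕ => (k : ℝ) := by
  obtain ⟨B, hB⟩ := hb.exists_bound
  obtain ⟨C, hC⟩ := (hb.mul hd).exists_bound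
  refine isLittleO_of_nonneg_of_le (.of_forall fun _ => Finset.sum_nonneg fun _ _ => abs_nonneg _)
    (v := fun k => variation k (fun i => b k i * d k i) + C + (B * variation k (d k) + C)) ?_
    (((hb.mul hd).isLittleO_variation.add (isLittleO_const_natCast C)).add
      ((hd.isLittleO_variation.const_mul_left B).add (isLittleO_const_natCast C)))
  filter_upwards [eventually_gt_atTop 0] with k hk
  refine ((hv k).sum_abs_jacobiMatrix_mulVec_sub_le (hB k) (d k)).trans ?_
  gcongr
  · exact hC k 0 hk
  · exact hC k (k - 1) (by omega)

theorem isLittleO_multiplierError_aeval (ha : SlowlyVarying a) (hb : SlowlyVarying b) {c : ℕ → ℝ}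
    (hc : ∀ k, |c k| ≤ 1) {v : ℕ → ℤ → ℝ} (hv : ∀ k, IsFreeWave (c k) (v k)) (p : ℝ[X]) :
    (fun k => multiplierError (aeval (jacobiMatrix k (a k) (b k)) p)
      (fun i => p.eval (a k i + 2 * b k i * c k)) (v k)) =o[atTop] fun k : ℕ => (k : ℝ) := by
  obtain ⟨A, hA⟩ := ha.exists_bound
  obtain ⟨B, hB⟩ := hb.exists_bound
  have hsymbol : SlowlyVarying fun k i => a k i + 2 * b k i * c k :=
    ha.add (((SlowlyVarying.const fun _ => le_rfl).mul hb).mul (.const hc))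
  induction p using Polynomial.induction_on with
  | C r => simpa only [aeval_C, eval_C, multiplierError_algebraMap] using isLittleO_zero _ _
  | add p q hp hq =>
    simp only [map_add, eval_add]
    exact isLittleO_of_nonneg_of_le (.of_forall fun _ => multiplierError_nonneg _ _ _)
      (.of_forall fun _ => multiplierError_add_le _ _ _ _ _) (hp.add hq)
  | monomial n r h =>
    rw [pow_succ', mul_left_comm]
    simp only [map_mul (aeval _) X, aeval_X, eval_mul (p := X), eval_X]
    refine isLittleO_of_nonneg_of_le (.of_forall fun _ => multiplierError_nonneg _ _ _)
      (.of_forall fun k => multiplierError_mul_le (sum_abs_jacobiMatrix_mulVec_le (R := A + B + B)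
        fun i hi j hj => ?_) _ _ _ _)
      ((h.const_mul_left _).add
        (isLittleO_sum_abs_jacobiMatrix_mulVec_sub a hb (hsymbol.eval _) hv))
    linarith [hA k i hi, hB k i hi, hB k j hj]

/-- The error in replacing the trace of `φ` of a Jacobi matrix by the sum of the means of `φ` along
the symbols of its entries. -/
def traceDefect (k : ℕ) (a b : ℕ → ℝ) (φ : ℝ → ℝ) : ℝ :=
  jacobiTrace k a b φ - ∑ i : Fin k, symbolMean φ (a i, b i)

theorem isLittleO_traceDefect_eval (ha : SlowlyVarying a) (hb : SlowlyVarying b) (p : ℝ[X]) :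
    (fun k => traceDefect k (a k) (b k) p.eval) =o[atTop] fun k : ℕ => (k : ℝ) := by
  choose t ht using fun k => exists_abs_trace_sub_sum_symbolMean_le
    (aeval (jacobiMatrix k (a k) (b k)) p) (a k) (b k) p.continuous
  have hc : ∀ k, |Real.cos (t k)| ≤ 1 := fun k => Real.abs_cos_le_one _
  refine IsLittleO.of_norm_left (isLittleO_of_nonneg_of_le (.of_forall fun _ => norm_nonneg _)
    (.of_forall fun k => ?_)
    ((isLittleO_multiplierError_aeval ha hb hc (fun k => isFreeWave_cosWave (t k)) p).add
      (isLittleO_multiplierError_aeval ha hb hc (fun k => isFreeWave_sinWave (t k)) p)))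
  have htrace := sum_eval_eigenvalues_eq_trace_aeval (jacobiMatrix_isHermitian k (a k) (b k)) p
  rw [RCLike.ofReal_real_eq_id, id_eq] at htrace
  rw [traceDefect, jacobiTrace, htrace]
  exact ht k

theorem symbol_mem_Icc {R : ℝ} {p : ℝ × ℝ} (hp : |p.1| + 2 * |p.2| ≤ R) (t : ℝ) :
    p.1 + 2 * p.2 * Real.cos t ∈ Set.Icc (-R) R := by
  rw [Set.mem_Icc, ← abs_le]
  calc |p.1 + 2 * p.2 * Real.cos t| ≤ |p.1| + 2 * |p.2| * |Real.cos t| := by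
        simpa only [abs_mul, abs_two] using abs_add_le p.1 (2 * p.2 * Real.cos t)
    _ ≤ |p.1| + 2 * |p.2| := by
        gcongr |p.1| + ?_
        exact mul_le_of_le_one_right (by positivity) (Real.abs_cos_le_one t)
    _ ≤ R := hp

theorem continuousOn_symbolMean {R : ℝ} {φ : ℝ → ℝ} (hφ : ContinuousOn φ (Set.Icc (-R) R)) :
    ContinuousOn (symbolMean φ) {p | |p.1| + 2 * |p.2| ≤ R} := by
  intro q hq
  have hR : -R ≤ R := (symbol_mem_Icc hq 0).1.trans (symbol_mem_Icc hq 0).2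
  have hψ : Continuous (Set.IccExtend hR ((Set.Icc (-R) R).domRestrict φ)) :=
    hφ.domRestrict.Icc_extend'
  have hmean : Continuous (symbolMean (Set.IccExtend hR ((Set.Icc (-R) R).domRestrict φ))) :=
    continuous_const.mul
      (intervalIntegral.continuous_parametric_intervalIntegral_of_continuous' (by fun_prop) _ _)
  refine hmean.continuousOn.congr (fun p hp => ?_) q hq
  simp only [symbolMean, Set.IccExtend_of_mem hR _ (symbol_mem_Icc hp _), Set.domRestrict_apply]

theorem abs_symbolMean_sub_le {R ε : ℝ} {φ ψ : ℝ → ℝ} (hφ : ContinuousOn φ (Set.Icc (-R) R))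
    (hψ : ContinuousOn ψ (Set.Icc (-R) R)) (hε : ∀ s ∈ Set.Icc (-R) R, |φ s - ψ s| ≤ ε)
    {p : ℝ × ℝ} (hp : |p.1| + 2 * |p.2| ≤ R) : |symbolMean φ p - symbolMean ψ p| ≤ ε := by
  have hint : ∀ {χ : ℝ → ℝ}, ContinuousOn χ (Set.Icc (-R) R) →
      IntervalIntegrable (fun t => χ (p.1 + 2 * p.2 * Real.cos t)) volume 0 Real.pi := fun hχ =>
    (hχ.comp_continuous (by fun_prop) (symbol_mem_Icc hp)).intervalIntegrable _ _
  have hbound : ‖∫ t in (0 : ℝ)..Real.pi, (φ (p.1 + 2 * p.2 * Real.cos t) -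
      ψ (p.1 + 2 * p.2 * Real.cos t))‖ ≤ ε * |Real.pi - 0| :=
    intervalIntegral.norm_integral_le_of_norm_le_const fun t _ => hε _ (symbol_mem_Icc hp t)
  rw [sub_zero, abs_of_pos Real.pi_pos, Real.norm_eq_abs] at hbound
  rw [symbolMean, symbolMean, ← mul_sub, ← intervalIntegral.integral_sub (hint hφ) (hint hψ),
    abs_mul, abs_of_pos (by positivity), one_div_mul_eq_div, div_le_iff₀ Real.pi_pos]
  exact hbound

theorem abs_traceDefect_sub_le {a b : ℕ → ℝ} {R ε : ℝ}
    (hR : ∀ i < k, ∀ j < k, |a i| + |b i| + |b j| ≤ R) {φ ψ : ℝ → ℝ}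
    (hφ : ContinuousOn φ (Set.Icc (-R) R)) (hψ : ContinuousOn ψ (Set.Icc (-R) R))
    (hε : ∀ s ∈ Set.Icc (-R) R, |φ s - ψ s| ≤ ε) :
    |traceDefect k a b φ - traceDefect k a b ψ| ≤ 2 * ε * k := by
  have htrace : |jacobiTrace k a b φ - jacobiTrace k a b ψ| ≤ k * ε := by
    rw [jacobiTrace, jacobiTrace, ← Finset.sum_sub_distrib]
    refine (Finset.abs_sum_le_sum_abs _ _).trans
      ((Finset.sum_le_card_nsmul _ _ ε fun i _ => ?_).trans_eq (by simp))
    exact hε _ (abs_le.1 (abs_jacobiMatrix_eigenvalues_le hR i))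
  have hmean : |∑ i : Fin k, symbolMean φ (a i, b i) - ∑ i : Fin k, symbolMean ψ (a i, b i)| ≤
      k * ε := by
    rw [← Finset.sum_sub_distrib]
    refine (Finset.abs_sum_le_sum_abs _ _).trans
      ((Finset.sum_le_card_nsmul _ _ ε fun i _ => ?_).trans_eq (by simp))
    refine abs_symbolMean_sub_le hφ hψ hε ?_
    linarith [hR i i.2 i i.2]
  rw [traceDefect, traceDefect, sub_sub_sub_comm]
  linarith [abs_sub (jacobiTrace k a b φ - jacobiTrace k a b ψ)
    (∑ i : Fin k, symbolMean φ (a i, b i) - ∑ i : Fin k, symbolMean ψ (a i, b i))]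

theorem isLittleO_traceDefect (ha : SlowlyVarying a) (hb : SlowlyVarying b) {R : ℝ}
    (hR : ∀ k, ∀ i < k, ∀ j < k, |a k i| + |b k i| + |b k j| ≤ R) {φ : ℝ → ℝ}
    (hφ : ContinuousOn φ (Set.Icc (-R) R)) :
    (fun k => traceDefect k (a k) (b k) φ) =o[atTop] fun k : ℕ => (k : ℝ) := by
  refine isLittleO_iff.2 fun ε hε => ?_
  obtain ⟨p, hp⟩ := exists_polynomial_near_of_continuousOn (-R) R φ hφ (ε / 3) (by positivity)
  filter_upwards [isLittleO_iff.1 (isLittleO_traceDefect_eval ha hb p)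
    (show 0 < ε / 3 by positivity)] with k hk
  have hdiff := abs_traceDefect_sub_le (hR k) hφ p.continuousOn
    fun s hs => (abs_sub_comm _ _).trans_le (hp s hs).le
  simp only [Real.norm_eq_abs, Nat.abs_cast] at hk ⊢
  linarith [abs_sub_abs_le_abs_sub (traceDefect k (a k) (b k) φ) (traceDefect k (a k) (b k) p.eval)]

end TraceAsymptotics

section EmpiricalMeasures

variable {X : Type*} [TopologicalSpace X] [TopologicalSpace.MetrizableSpace X] [MeasurableSpace X]
  [BorelSpace X]

theorem exists_subseq_tendsto_average_of_compactSpace [CompactSpace X] (x : ∀ k, Fin k → X) :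
    ∃ g : ℕ → ℕ, StrictMono g ∧ (∀ j, 0 < g j) ∧ ∃ μ : Measure X, IsProbabilityMeasure μ ∧
      ∀ ψ : X → ℝ, Continuous ψ → Tendsto (fun j : ℕ => (1 / (g j : ℝ)) * ∑ i, ψ (x (g j) i))
        atTop (𝓝 (∫ p, ψ p ∂μ)) := by
  let empirical (k : ℕ) : ProbabilityMeasure X :=
    ⟨(PMF.uniformOfFintype (Fin (k + 1))).toMeasure.map (x (k + 1)),
      Measure.isProbabilityMeasure_map (measurable_of_finite _).aemeasurable⟩
  have hempirical : ∀ (k : ℕ) {ψ : X → ℝ}, Continuous ψ → ∫ p, ψ p ∂(empirical k : Measure X) =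
      (1 / ((k + 1 : ℕ) : ℝ)) * ∑ i, ψ (x (k + 1) i) := fun k ψ hψ => by
    rw [ProbabilityMeasure.coe_mk, integral_map (measurable_of_finite _).aemeasurable
      hψ.aestronglyMeasurable, PMF.integral_eq_sum, Finset.mul_sum]
    simp [ENNReal.toReal_add]
  obtain ⟨μ, f, hf, hlim⟩ := CompactSpace.tendsto_subseq empirical
  refine ⟨fun j => f j + 1, hf.add_const 1, fun j => Nat.succ_pos _, μ, inferInstance,
    fun ψ hψ => ?_⟩
  have h := ProbabilityMeasure.tendsto_iff_forall_integral_tendsto.1 hlim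
    (.mkOfCompact ⟨ψ, hψ⟩)
  exact h.congr fun j => hempirical (f j) hψ

theorem exists_subseq_tendsto_average {K : Set X} (hK : IsCompact K) {x : ℕ → ℕ → X}
    (hx : ∀ k, ∀ i < k, x k i ∈ K) :
    ∃ g : ℕ → ℕ, StrictMono g ∧ (∀ j, 0 < g j) ∧
      ∃ μ : Measure X, IsProbabilityMeasure μ ∧ μ Kᶜ = 0 ∧ ∀ ψ : X → ℝ, ContinuousOn ψ K →
        Tendsto (fun j : ℕ => (1 / (g j : ℝ)) * ∑ i : Fin (g j), ψ (x (g j) i))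
          atTop (𝓝 (∫ p, ψ p ∂μ)) := by
  have : CompactSpace K := isCompact_iff_compactSpace.1 hK
  have hval : MeasurableEmbedding ((↑) : K → X) := .subtype_coe hK.measurableSet
  obtain ⟨g, hg, hpos, ν, hν, hlim⟩ := exists_subseq_tendsto_average_of_compactSpace
    fun k (i : Fin k) => (⟨x k i, hx k i i.2⟩ : K)
  refine ⟨g, hg, hpos, ν.map (↑), Measure.isProbabilityMeasure_map hval.measurable.aemeasurable,
    ?_, fun ψ hψ => ?_⟩
  · rw [hval.map_apply]
    simp
  · rw [hval.integral_map]
    exact hlim (fun p : K => ψ p) hψ.domRestrict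

end EmpiricalMeasures

theorem exists_subsequence_trace_formula_general {K : Set (ℝ × ℝ)} (hK : IsCompact K) {R : ℝ}
    (hR : ∀ p ∈ K, ∀ q ∈ K, |p.1| + |p.2| + |q.2| ≤ R) {a b : ℕ → ℕ → ℝ}
    (ha : (fun k => variation k (a k)) =o[atTop] fun k : ℕ => (k : ℝ))
    (hb : (fun k => variation k (b k)) =o[atTop] fun k : ℕ => (k : ℝ))
    (hab : ∀ k, ∀ i < k, (a k i, b k i) ∈ K) :
    ∃ g : ℕ → ℕ, StrictMono g ∧ (∀ j, 0 < g j) ∧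
      ∃ μ : Measure (ℝ × ℝ), IsProbabilityMeasure μ ∧ μ Kᶜ = 0 ∧
        ∀ φ : ℝ → ℝ, ContinuousOn φ (Set.Icc (-R) R) →
          Tendsto (fun j : ℕ => (1 / (g j : ℝ)) * jacobiTrace (g j) (a (g j)) (b (g j)) φ) atTop
            (𝓝 ((1 / Real.pi) *
              ∫ p, (∫ t in (0 : ℝ)..Real.pi, φ (p.1 + 2 * p.2 * Real.cos t)) ∂μ)) := by
  have hrow : ∀ k, ∀ i < k, ∀ j < k, |a k i| + |b k i| + |b k j| ≤ R :=
    fun k i hi j hj => hR _ (hab k i hi) _ (hab k j hj)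
  have hsa : SlowlyVarying a := ⟨ha, R, fun k i hi => by
    linarith [hrow k i hi i hi, abs_nonneg (b k i)]⟩
  have hsb : SlowlyVarying b := ⟨hb, R, fun k i hi => by
    linarith [hrow k i hi i hi, abs_nonneg (a k i), abs_nonneg (b k i)]⟩
  obtain ⟨g, hg, hpos, μ, hμ, hμK, hlim⟩ := exists_subseq_tendsto_average hK hab
  refine ⟨g, hg, hpos, μ, hμ, hμK, fun φ hφ => ?_⟩
  have hmean : ContinuousOn (symbolMean φ) K :=
    (continuousOn_symbolMean hφ).mono fun p hp => by
      rw [Set.mem_ofPred_eq, two_mul, ← add_assoc]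
      exact hR p hp p hp
  have hdefect : Tendsto (fun j => traceDefect (g j) (a (g j)) (b (g j)) φ / g j) atTop (𝓝 0) :=
    (isLittleO_traceDefect hsa hsb hrow hφ).tendsto_div_nhds_zero.comp hg.tendsto_atTop
  rw [← integral_const_mul]
  refine (add_zero (∫ p, symbolMean φ p ∂μ) ▸ (hlim _ hmean).add hdefect).congr fun j => ?_
  rw [traceDefect]
  ring

/-- for `(a^k)ₖ, (b^k)ₖ ∈ 𝒮` there is a subsequence and a probability measure
`μ` supported in `I²` along which the trace formula holds for every `φ ∈ C[-3,3]`. -/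
theorem exists_subsequence_trace_formula (a b : ℕ → ℕ → ℝ) (ha : MemS a) (hb : MemS b) :
    ∃ g : ℕ → ℕ, StrictMono g ∧ (∀ j, 0 < g j) ∧
      ∃ μ : Measure (ℝ × ℝ), IsProbabilityMeasure μ ∧
        μ ((Set.Icc (0 : ℝ) 1 ×ˢ Set.Icc (0 : ℝ) 1)ᶜ) = 0 ∧
        ∀ φ : ℝ → ℝ, ContinuousOn φ (Set.Icc (-3 : ℝ) 3) →
          Filter.Tendsto
            (fun j : ℕ => (1 / (g j : ℝ)) * jacobiTrace (g j) (a (g j)) (b (g j)) φ)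
            Filter.atTop
            (nhds ((1 / Real.pi) *
              ∫ p, (∫ t in (0 : ℝ)..Real.pi, φ (p.1 + 2 * p.2 * Real.cos t)) ∂μ)) := by
  refine exists_subsequence_trace_formula_general (isCompact_Icc.prod isCompact_Icc)
    (fun p ⟨hp₁, hp₂⟩ q ⟨_, hq₂⟩ => ?_) ha.1 hb.1 fun k i hi => ⟨ha.2 k i hi, hb.2 k i hi⟩
  rw [abs_of_nonneg hp₁.1, abs_of_nonneg hp₂.1, abs_of_nonneg hq₂.1]
  linarith [hp₁.2, hp₂.2, hq₂.2]
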